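/- (Lemma 4.5, circle-rotation form) Suppose ρ ∈ (0,1) is irrational and its continued fraction partial quotients satisfy aₙ ≤ n² for all sufficiently large n. Then for any δ > 0 there exists ε₀ > 0 such that for every 0 < ε ≤ ε₀ and every real x there exists an integer n with 1 ≤ n ≤ ε^{−1/3−δ} and ‖x + n·ρ‖ ≤ √(n·ε). Equivalently, the first time N(x) = min{ n ≥ 0 : √(nε) ≥ ‖x + nρ‖ } satisfies N(x) ≤ ε^{−1/3−δ} for all x. -/

import Mathlib

/-!
Write `qₘ`, `pₘ` for the denominators and numerators of the convergents of `ρ`.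

The points `i pₘ / qₘ`, for `i` in any window of `qₘ` consecutive integers, run through all
multiples of `1 / qₘ` modulo one, because `pₘ` and `qₘ` are coprime. Since
`|qₘ ρ - pₘ| ≤ 1 / qₘ`, replacing `pₘ / qₘ` by `ρ` moves these points by at most `2 / qₘ` when
`qₘ ≤ i < 2 qₘ`. Hence every `x` has some `n ∈ [qₘ, 2 qₘ)` with `‖x + n ρ‖ ≤ 3 / qₘ`
(`exists_close_return`). As `n ≥ qₘ`, this is at most `√(n ε)` as soon as `qₘ³ ε ≥ 9`.

Take the least `m` with `qₘ ≥ (9 / ε)^(1/3)`. The bound `aₙ ≤ n²` and the exponential growth of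
`qₙ` give `qₙ₊₁ ≤ K qₙ^(1 + η)` for every `η > 0` (`cfq_succ_le_rpow`), so minimality of `m`
yields `n < 2 qₘ ≤ 2 K (9 / ε)^((1 + δ) / 3)`, which is below `ε^(-1/3 - δ)` for small `ε`.
-/

open MeasureTheory Filter

/-- The Gauss map `x ↦ {1/x}`. -/
noncomputable def gaussMap (x : ℝ) : ℝ := Int.fract (1 / x)

/-- The `n`-th continued fraction partial quotient of `ρ` (for `n ≥ 1`):
`aₙ(ρ) = ⌊1 / G^[n-1] ρ⌋` where `G` is the Gauss map. -/
noncomputable def cfa (ρ : ℝ) (n : ℕ) : ℤ := ⌊1 / (gaussMap^[n - 1] ρ)⌋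

/-- The Diophantine condition (2): `aₙ ≤ n²` for all sufficiently large `n`. -/
def DiophCond (ρ : ℝ) : Prop := ∃ N : ℕ, ∀ n : ℕ, N ≤ n → cfa ρ n ≤ (n : ℤ) ^ 2

/-- Denominators `qₙ` of the continued fraction convergents of `ρ`:
`q₀ = 1`, `q₁ = a₁`, `q_{n+2} = a_{n+2} q_{n+1} + qₙ`. -/
noncomputable def cfq (ρ : ℝ) : ℕ → ℤ
  | 0 => 1
  | 1 => cfa ρ 1
  | n + 2 => cfa ρ (n + 2) * cfq ρ (n + 1) + cfq ρ n

/-- Numerators `pₙ` of the continued fraction convergents of `ρ`: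
`p₀ = 0`, `p₁ = 1`, `p_{n+2} = a_{n+2} p_{n+1} + pₙ`. -/
noncomputable def cfp (ρ : ℝ) : ℕ → ℤ
  | 0 => 0
  | 1 => 1
  | n + 2 => cfa ρ (n + 2) * cfp ρ (n + 1) + cfp ρ n

/-- Distance from a real number to the nearest integer. -/
noncomputable def distNearestInt (t : ℝ) : ℝ := |t - round t|

/-! ### Continued fraction facts -/

lemma gaussMap_iterate_irrational {ρ : ℝ} (hirr : Irrational ρ) (n : ℕ) :
    Irrational (gaussMap^[n] ρ) := by
  induction n with
  | zero => simpa using hirr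
  | succ n ih =>
    rw [Function.iterate_succ_apply']
    unfold gaussMap Int.fract
    rw [one_div]
    exact ih.inv.sub_intCast _

lemma gaussMap_iterate_mem {ρ : ℝ} (hρ : ρ ∈ Set.Ioo (0 : ℝ) 1) (hirr : Irrational ρ) (n : ℕ) :
    gaussMap^[n] ρ ∈ Set.Ioo (0 : ℝ) 1 := by
  cases n with
  | zero => simpa using hρ
  | succ n =>
    have h := (gaussMap_iterate_irrational hirr (n + 1)).ne_zero
    rw [Function.iterate_succ_apply'] at h ⊢
    exact ⟨lt_of_le_of_ne (Int.fract_nonneg _) h.symm, Int.fract_lt_one _⟩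

lemma one_div_gaussMap_iterate (ρ : ℝ) (n : ℕ) :
    1 / (gaussMap^[n] ρ) = cfa ρ (n + 1) + gaussMap^[n + 1] ρ := by
  rw [Function.iterate_succ_apply']
  simp only [cfa, gaussMap, Nat.add_sub_cancel]
  exact (Int.floor_add_fract _).symm

lemma one_le_cfa {ρ : ℝ} (hρ : ρ ∈ Set.Ioo (0 : ℝ) 1) (hirr : Irrational ρ) (n : ℕ) :
    1 ≤ cfa ρ (n + 1) := by
  have h := gaussMap_iterate_mem hρ hirr n
  simp only [cfa, Nat.add_sub_cancel]
  rw [Int.le_floor]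
  push_cast
  rw [le_div_iff₀ h.1]
  linarith [h.2]

lemma cfq_pos_and_mono {ρ : ℝ} (hρ : ρ ∈ Set.Ioo (0 : ℝ) 1) (hirr : Irrational ρ) (n : ℕ) :
    1 ≤ cfq ρ n ∧ cfq ρ n ≤ cfq ρ (n + 1) := by
  induction n with
  | zero => exact ⟨by simp [cfq], by simpa [cfq] using one_le_cfa hρ hirr 0⟩
  | succ n ih =>
    refine ⟨ih.1.trans ih.2, ?_⟩
    have h := one_le_cfa hρ hirr (n + 1)
    simp only [cfq]
    nlinarith [ih.1, ih.2]

/-- The denominators at least double every two steps, hence `qₙ² ≥ 2ⁿ⁻¹`. -/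
lemma two_pow_le_cfq_sq {ρ : ℝ} (hρ : ρ ∈ Set.Ioo (0 : ℝ) 1) (hirr : Irrational ρ) (n : ℕ) :
    (2 : ℤ) ^ n ≤ 2 * cfq ρ n ^ 2 := by
  induction n using Nat.twoStepInduction with
  | zero => simp [cfq]
  | one =>
    have h := (cfq_pos_and_mono hρ hirr 1).1
    nlinarith
  | more n ih _ =>
    have h := one_le_cfa hρ hirr (n + 1)
    have h0 := cfq_pos_and_mono hρ hirr n
    have h2 : 2 * cfq ρ n ≤ cfq ρ (n + 2) := by
      simp only [cfq]
      nlinarith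
    rw [pow_add]
    nlinarith

lemma cfq_succ_le {ρ : ℝ} (hρ : ρ ∈ Set.Ioo (0 : ℝ) 1) (hirr : Irrational ρ) (n : ℕ) :
    cfq ρ (n + 1) ≤ 2 * cfa ρ (n + 1) * cfq ρ n := by
  have h := one_le_cfa hρ hirr n
  cases n with
  | zero =>
    simp only [cfq]
    simp only [zero_add] at h ⊢
    linarith
  | succ n =>
    have h0 := cfq_pos_and_mono hρ hirr n
    simp only [cfq] at *
    nlinarith

lemma cf_det (ρ : ℝ) (n : ℕ) :
    cfq ρ (n + 1) * cfp ρ n - cfp ρ (n + 1) * cfq ρ n = (-1) ^ (n + 1) := by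
  induction n with
  | zero => simp [cfq, cfp]
  | succ n ih =>
    rw [pow_succ, ← ih]
    simp only [cfq, cfp]
    ring

lemma cf_formula {ρ : ℝ} (hρ : ρ ∈ Set.Ioo (0 : ℝ) 1) (hirr : Irrational ρ) (n : ℕ) :
    ρ * (cfq ρ (n + 1) + gaussMap^[n + 1] ρ * cfq ρ n)
      = cfp ρ (n + 1) + gaussMap^[n + 1] ρ * cfp ρ n := by
  induction n with
  | zero =>
    have h := one_div_gaussMap_iterate ρ 0
    have h0 := hρ.1.ne'
    simp only [Function.iterate_zero, id_eq, zero_add] at h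
    simp only [cfq, cfp, zero_add]
    push_cast
    rw [mul_one, ← h]
    field_simp
    simp
  | succ n ih =>
    have h := one_div_gaussMap_iterate ρ (n + 1)
    have h0 := (gaussMap_iterate_mem hρ hirr (n + 1)).1.ne'
    rw [div_eq_iff h0] at h
    apply mul_left_cancel₀ h0
    simp only [cfq, cfp]
    push_cast
    linear_combination ih + (cfp ρ (n + 1) - ρ * cfq ρ (n + 1) : ℝ) * h

lemma abs_cfq_mul_sub_cfp_le {ρ : ℝ} (hρ : ρ ∈ Set.Ioo (0 : ℝ) 1) (hirr : Irrational ρ)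
    (n : ℕ) : |cfq ρ (n + 1) * ρ - cfp ρ (n + 1)| * cfq ρ (n + 1) ≤ 1 := by
  have hθ := gaussMap_iterate_mem hρ hirr (n + 1)
  have hf := cf_formula hρ hirr n
  have hd : (cfq ρ (n + 1) * cfp ρ n - cfp ρ (n + 1) * cfq ρ n : ℝ) = (-1) ^ (n + 1) := by
    exact_mod_cast cf_det ρ n
  set θ := gaussMap^[n + 1] ρ
  have h0 : (1 : ℝ) ≤ cfq ρ n := by exact_mod_cast (cfq_pos_and_mono hρ hirr n).1
  have h1 : (1 : ℝ) ≤ cfq ρ (n + 1) := by exact_mod_cast (cfq_pos_and_mono hρ hirr (n + 1)).1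
  have key : (cfq ρ (n + 1) * ρ - cfp ρ (n + 1) : ℝ) * (cfq ρ (n + 1) + θ * cfq ρ n)
      = θ * (-1) ^ (n + 1) := by
    rw [← hd]
    linear_combination (cfq ρ (n + 1) : ℝ) * hf
  have habs := congrArg abs key
  have hpos : (0 : ℝ) < cfq ρ (n + 1) + θ * cfq ρ n := by nlinarith [hθ.1]
  rw [abs_mul, abs_mul, abs_pow, abs_neg, abs_one, one_pow, mul_one, abs_of_pos hpos,
    abs_of_pos hθ.1] at habs
  have hmul : (cfq ρ (n + 1) : ℝ) ≤ cfq ρ (n + 1) + θ * cfq ρ n := by nlinarith [hθ.1]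
  have := mul_le_mul_of_nonneg_left hmul (abs_nonneg (cfq ρ (n + 1) * ρ - cfp ρ (n + 1) : ℝ))
  linarith [hθ.2]

/-! ### Covering the circle by an orbit segment -/

/-- If `p / q` is a reduced fraction with `|q ρ - p| ≤ 1 / q`, then some time in the window
`[q, 2q)` brings `x` within `3 / q` of an integer. -/
lemma exists_close_return {ρ : ℝ} {p q : ℤ} (hq : 1 ≤ q) (hpq : IsCoprime p q)
    (happ : |q * ρ - p| * q ≤ 1) (x : ℝ) :
    ∃ n : ℤ, q ≤ n ∧ n < 2 * q ∧ distNearestInt (x + n * ρ) ≤ 3 / q := by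
  obtain ⟨u, v, huv⟩ := hpq
  have hq0 : 0 < q := by omega
  have hqR : (0 : ℝ) < q := by exact_mod_cast hq0
  -- `j / q` is the multiple of `1 / q` nearest to `-x`, and `u` inverts `p` modulo `q`.
  set j : ℤ := round (-x * q) with hj
  have hjx : |-x * q - j| ≤ 1 / 2 := abs_sub_round _
  set r : ℤ := (j * u) % q with hr
  have hr0 : 0 ≤ r := Int.emod_nonneg _ hq0.ne'
  have hr1 : r < q := Int.emod_lt_of_pos _ hq0
  have hrdef : r = j * u - q * ((j * u) / q) := by rw [hr, Int.emod_def]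
  refine ⟨r + q, by omega, by omega, ?_⟩
  set k : ℤ := p - j * v - p * ((j * u) / q) with hk
  have hrp : (r + q) * p = j + q * k := by
    rw [hrdef, hk]
    linear_combination j * huv
  have hrpR : ((r : ℝ) + q) * p = j + q * k := by exact_mod_cast hrp
  have hnR : ((r : ℝ) + q) ≤ 2 * q := by
    have : (r : ℝ) < q := by exact_mod_cast hr1
    linarith
  have hn0 : (0 : ℝ) ≤ (r : ℝ) + q := by
    have : (0 : ℝ) ≤ r := by exact_mod_cast hr0
    linarith
  refine (round_le _ k).trans ?_
  rw [le_div_iff₀ hqR]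
  push_cast
  have hsplit : (x + ((r : ℝ) + q) * ρ - k) * q
      = -(-x * q - j) + ((r : ℝ) + q) * (q * ρ - p) := by
    linear_combination hrpR
  rw [← abs_of_pos hqR, ← abs_mul, abs_of_pos hqR, hsplit]
  refine (abs_add_le _ _).trans ?_
  rw [abs_neg, abs_mul, abs_of_nonneg hn0]
  nlinarith [abs_nonneg (q * ρ - p : ℝ)]

/-! ### Growth of the denominators -/

/-- Under the Diophantine condition the denominators grow slower than any power `1 + η` per
step: for large `n` the quotient `qₙ₊₁ / qₙ^(1 + η)` is at most a fixed multiple of `n² / 2^(η n / 2)`. -/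
lemma cfq_succ_le_rpow {ρ : ℝ} (hρ : ρ ∈ Set.Ioo (0 : ℝ) 1) (hirr : Irrational ρ)
    (hdioph : DiophCond ρ) {η : ℝ} (hη : 0 < η) :
    ∃ K : ℝ, 0 < K ∧ ∀ n, (cfq ρ (n + 1) : ℝ) ≤ K * (cfq ρ n : ℝ) ^ (1 + η) := by
  obtain ⟨N, hN⟩ := hdioph
  have hq1 : ∀ n, (1 : ℝ) ≤ cfq ρ n := fun n => by
    exact_mod_cast (cfq_pos_and_mono hρ hirr n).1
  set r : ℝ := (2 : ℝ) ^ (η / 2) with hr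
  have hr1 : 1 < r := Real.one_lt_rpow (by norm_num) (by positivity)
  have hr0 : 0 < r := by linarith
  have hrq : ∀ n, r ^ n ≤ r * (cfq ρ n : ℝ) ^ η := by
    intro n
    have h : (2 : ℝ) ^ n ≤ 2 * (cfq ρ n : ℝ) ^ 2 := by
      exact_mod_cast two_pow_le_cfq_sq hρ hirr n
    have h' := Real.rpow_le_rpow (by positivity) h (by positivity : 0 ≤ η / 2)
    have hqn : (0 : ℝ) ≤ cfq ρ n := by linarith [hq1 n]
    rw [Real.mul_rpow (by norm_num) (by positivity), ← Real.rpow_natCast, ← Real.rpow_natCast,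
      ← Real.rpow_mul (by norm_num), ← Real.rpow_mul hqn] at h'
    rw [hr, ← Real.rpow_natCast, ← Real.rpow_mul (by norm_num), mul_comm (η / 2)]
    convert h' using 3
    push_cast
    ring
  have htend : Tendsto (fun n : ℕ => 2 * r ^ 2 * (((n + 1 : ℕ) : ℝ) ^ 2 / r ^ (n + 1)))
      atTop (nhds (2 * r ^ 2 * 0)) :=
    ((tendsto_add_atTop_iff_nat 1).2
      (tendsto_pow_const_div_const_pow_of_one_lt 2 hr1)).const_mul _
  rw [mul_zero] at htend
  have hu : Tendsto (fun n => (cfq ρ (n + 1) : ℝ) / (cfq ρ n : ℝ) ^ (1 + η)) atTop (nhds 0) := by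
    refine squeeze_zero' (Eventually.of_forall fun n => ?_) ?_ htend
    · have h0 := hq1 n
      have h1 := hq1 (n + 1)
      positivity
    · filter_upwards [eventually_ge_atTop N] with n hn
      have h0 : (0 : ℝ) < cfq ρ n := by linarith [hq1 n]
      have ha : (cfa ρ (n + 1) : ℝ) ≤ ((n + 1 : ℕ) : ℝ) ^ 2 := by
        exact_mod_cast hN (n + 1) (by omega)
      have hs : (cfq ρ (n + 1) : ℝ) ≤ 2 * cfa ρ (n + 1) * cfq ρ n := by
        exact_mod_cast cfq_succ_le hρ hirr n
      rw [div_le_iff₀ (by positivity), Real.rpow_add h0, Real.rpow_one]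
      have hx : (1 : ℝ) ≤ r ^ 2 * (cfq ρ n : ℝ) ^ η / r ^ (n + 1) := by
        rw [le_div_iff₀ (by positivity), pow_succ]
        nlinarith [hrq n]
      calc (cfq ρ (n + 1) : ℝ) ≤ 2 * cfa ρ (n + 1) * cfq ρ n := hs
        _ ≤ 2 * ((n + 1 : ℕ) : ℝ) ^ 2 * cfq ρ n := by gcongr
        _ ≤ 2 * ((n + 1 : ℕ) : ℝ) ^ 2 * cfq ρ n
            * (r ^ 2 * (cfq ρ n : ℝ) ^ η / r ^ (n + 1)) :=
          le_mul_of_one_le_right (by positivity) hx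
        _ = _ := by ring
  obtain ⟨K, hK⟩ := hu.bddAbove_range
  refine ⟨max K 1, by positivity, fun n => ?_⟩
  have h0 : (0 : ℝ) < cfq ρ n := by linarith [hq1 n]
  rw [← div_le_iff₀ (by positivity)]
  exact (hK ⟨n, rfl⟩).trans (le_max_left _ _)

/-- Lemma 4.5, circle-rotation form: under the Diophantine condition (2),
for any `δ > 0` there exists `ε₀ > 0` such that for every `0 < ε ≤ ε₀` and every real
`x` there is an integer `n` with `1 ≤ n ≤ ε^{−1/3−δ}` and `‖x + nρ‖ ≤ √(nε)`. -/
theorem stmt_6 (ρ : ℝ) (hρ : ρ ∈ Set.Ioo (0 : ℝ) 1) (hirr : Irrational ρ)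
    (hdioph : DiophCond ρ) :
    ∀ δ : ℝ, 0 < δ → ∃ ε₀ : ℝ, 0 < ε₀ ∧ ∀ ε : ℝ, 0 < ε → ε ≤ ε₀ → ∀ x : ℝ,
      ∃ n : ℕ, 1 ≤ n ∧ (n : ℝ) ≤ ε ^ (-(1 / 3 : ℝ) - δ) ∧
        distNearestInt (x + (n : ℝ) * ρ) ≤ Real.sqrt ((n : ℝ) * ε) := by
  intro δ hδ
  obtain ⟨K, hK, hgrow⟩ := cfq_succ_le_rpow hρ hirr hdioph hδ
  have hq1 : ∀ n, (1 : ℝ) ≤ cfq ρ n := fun n => by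
    exact_mod_cast (cfq_pos_and_mono hρ hirr n).1
  set M : ℝ := 2 * K * (9 : ℝ) ^ ((1 + δ) / 3) with hM
  have hM0 : 0 < M := by positivity
  -- `M ≤ ε ^ (-2δ/3)` is what absorbs the constants into the exponent.
  refine ⟨min 1 (M ^ (-(3 / (2 * δ)))), by positivity, fun ε hε hεle x => ?_⟩
  have hε1 : ε ≤ 1 := hεle.trans (min_le_left _ _)
  have hMε : M ≤ ε ^ (-(2 * δ / 3)) := by
    have h := Real.rpow_le_rpow_of_nonpos hε (hεle.trans (min_le_right _ _))
      (by have : 0 < 2 * δ / 3 := by positivity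
          linarith : -(2 * δ / 3) ≤ 0)
    rw [← Real.rpow_mul hM0.le] at h
    have he : -(3 / (2 * δ)) * -(2 * δ / 3) = 1 := by field_simp
    rwa [he, Real.rpow_one] at h
  set T : ℝ := (9 / ε) ^ (1 / 3 : ℝ) with hT
  have hT1 : 1 < T := Real.one_lt_rpow (by rw [lt_div_iff₀ hε]; linarith) (by norm_num)
  have hT3 : T ^ 3 = 9 / ε := by
    rw [hT, ← Real.rpow_natCast, ← Real.rpow_mul (by positivity)]
    norm_num
  have hex : ∃ m, T ≤ (cfq ρ m : ℝ) := by
    obtain ⟨m, hm⟩ := pow_unbounded_of_one_lt (2 * T ^ 2) (one_lt_two : (1 : ℝ) < 2)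
    refine ⟨m, ?_⟩
    have h : (2 : ℝ) ^ m ≤ 2 * (cfq ρ m : ℝ) ^ 2 := by
      exact_mod_cast two_pow_le_cfq_sq hρ hirr m
    nlinarith [hq1 m]
  classical
  obtain ⟨m, hTm, hmT⟩ : ∃ m, T ≤ (cfq ρ (m + 1) : ℝ) ∧ (cfq ρ m : ℝ) < T := by
    obtain ⟨m, hm⟩ : ∃ m, Nat.find hex = m + 1 := by
      refine Nat.exists_eq_succ_of_ne_zero fun h0 => ?_
      have h := Nat.find_spec hex
      rw [h0] at h
      simp only [cfq, Int.cast_one] at h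
      linarith
    refine ⟨m, hm ▸ Nat.find_spec hex, ?_⟩
    exact not_le.1 (Nat.find_min hex (by omega))
  have hcop : IsCoprime (cfp ρ (m + 1)) (cfq ρ (m + 1)) := by
    have hs : ((-1 : ℤ) ^ (m + 1)) * (-1) ^ (m + 1) = 1 := by
      rw [← mul_pow]
      norm_num
    refine ⟨-(-1) ^ (m + 1) * cfq ρ m, (-1) ^ (m + 1) * cfp ρ m, ?_⟩
    linear_combination (-1) ^ (m + 1) * cf_det ρ m + hs
  obtain ⟨n, hn1, hn2, hdist⟩ := exists_close_return (cfq_pos_and_mono hρ hirr (m + 1)).1 hcop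
    (abs_cfq_mul_sub_cfp_le hρ hirr m) x
  have hq := (cfq_pos_and_mono hρ hirr (m + 1)).1
  lift n to ℕ using by omega
  have hn1R : (cfq ρ (m + 1) : ℝ) ≤ n := by exact_mod_cast hn1
  have hn2R : (n : ℝ) < 2 * cfq ρ (m + 1) := by exact_mod_cast hn2
  have hqR := hq1 (m + 1)
  have hqmR := hq1 m
  refine ⟨n, by omega, ?_, ?_⟩
  · have hTδ : (cfq ρ m : ℝ) ^ (1 + δ) ≤ T ^ (1 + δ) :=
      Real.rpow_le_rpow (by linarith) hmT.le (by linarith)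
    have hTe : T ^ (1 + δ) = (9 : ℝ) ^ ((1 + δ) / 3) * ε ^ (-((1 + δ) / 3)) := by
      rw [hT, ← Real.rpow_mul (by positivity), Real.div_rpow (by norm_num) hε.le,
        Real.rpow_neg hε.le, ← div_eq_mul_inv]
      ring_nf
    calc (n : ℝ) ≤ 2 * (K * (cfq ρ m : ℝ) ^ (1 + δ)) := by linarith [hgrow m]
      _ ≤ 2 * (K * T ^ (1 + δ)) := by gcongr
      _ = M * ε ^ (-((1 + δ) / 3)) := by rw [hTe, hM]; ring
      _ ≤ ε ^ (-(2 * δ / 3)) * ε ^ (-((1 + δ) / 3)) := by gcongr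
      _ = ε ^ (-(1 / 3 : ℝ) - δ) := by
        rw [← Real.rpow_add hε]
        ring_nf
  · refine (by simpa using hdist : _ ≤ (3 : ℝ) / cfq ρ (m + 1)).trans ?_
    apply Real.le_sqrt_of_sq_le
    have hcube : 9 ≤ (cfq ρ (m + 1) : ℝ) ^ 3 * ε := by
      rw [← div_le_iff₀ hε, ← hT3]
      gcongr
    rw [div_pow, div_le_iff₀ (by positivity)]
    have : (cfq ρ (m + 1) : ℝ) * ((cfq ρ (m + 1) : ℝ) ^ 2 * ε)
        ≤ n * ((cfq ρ (m + 1) : ℝ) ^ 2 * ε) := by gcongr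
    linarith
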